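/- arXiv:2504.12566 — 2 statements merged into one kernel-verified Lean document; each statement's English description precedes it below -/
import Mathlib

section
/- Every automorphism of the monoid P_fin(ℤ) is of the form ε·φ_{α,β} for some integers α, β and some sign ε ∈ {+1, −1}, where φ_{α,β} is the map sending a nonempty finite set X ⊆ ℤ to X + α·min X + β·max X, and (−F)(X) := −F(X) denotes pointwise negation of the output. -/
open Finset Pointwise

/-- Nonempty finite subsets of ℤ. -/
abbrev NFin : Type := {X : Finset ℤ // X.Nonempty}

/-- Sumset operation on nonempty finite subsets of ℤ. -/
instance : Add NFin := ⟨fun X Y => ⟨X.1 + Y.1, X.2.add Y.2⟩⟩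

/-- Minimum of a nonempty finite subset of ℤ. -/
def minz (X : NFin) : ℤ := X.1.min' X.2

/-- Maximum of a nonempty finite subset of ℤ. -/
def maxz (X : NFin) : ℤ := X.1.max' X.2

/-- Translate `X + c`. -/
def tr (X : NFin) (c : ℤ) : NFin := ⟨X.1.image (· + c), X.2.image _⟩

/-- `f_α(X) = X + α·min X − α·max X`. -/
def fa (α : ℤ) (X : NFin) : NFin := tr X (α * minz X - α * maxz X)

/-- `g_α(X) = X + (α−1)·min X − (α+1)·max X`. -/
def ga (α : ℤ) (X : NFin) : NFin := tr X ((α - 1) * minz X - (α + 1) * maxz X)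

/-- Pointwise negation `X ↦ −X`. -/
def negF (X : NFin) : NFin := ⟨-X.1, X.2.neg⟩

/-- `φ_{α,β}(X) = X + α·min X + β·max X`. -/
def phiab (α β : ℤ) (X : NFin) : NFin := tr X (α * minz X + β * maxz X)

/-!
Composing a surjective endomorphism with translations gives a surjective endomorphism `ψ` that
preserves the minimum and the maximum, because additive maps to `ℤ` are linear combinations of
`minz` and `maxz`. Such a `ψ` is injective, since only finitely many sets have given endpoints,
and it fixes intervals. Among sets with the same endpoints, inclusion can be recovered from the
knowledge of which sums are intervals, so `ψ` is monotone on them in both directions. Hence `ψ`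
permutes the sets `{0, a, a + b}` with `a, b > 0`. Adding intervals to them reveals their largest
gap, so each is either fixed or reflected to `{0, b, a + b}`. Adding `{0, c}` shows that the same
choice is made for all `a` and `b`, and a set is determined by its endpoints together with the
translates of such triples that it contains.
-/

theorem injective_of_surjective_of_finite_fibers {α β : Type*} {f : α → α} {g : α → β}
    (hf : f.Surjective) (hg : ∀ x, g (f x) = g x) (hfin : ∀ b, (g ⁻¹' {b}).Finite) :
    f.Injective := by
  intro x y hxy
  let fiber := (hfin (g x)).toFinset
  have mem_fiber : ∀ {z}, z ∈ fiber ↔ g z = g x := by simp [fiber]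
  have hmaps : Set.MapsTo f fiber fiber := fun z hz =>
    mem_fiber.2 ((hg z).trans (mem_fiber.1 hz))
  have hsurj : Set.SurjOn f fiber fiber := by
    intro z hz
    obtain ⟨w, rfl⟩ := hf z
    exact ⟨w, mem_fiber.2 ((hg w).symm.trans (mem_fiber.1 hz)), rfl⟩
  refine Finset.injOn_of_surjOn_of_card_le f hmaps hsurj le_rfl (mem_fiber.2 rfl) ?_ hxy
  exact mem_fiber.2 (by rw [← hg y, ← hxy, hg x])

namespace NFin

/-! ### Minimum, maximum and translation -/

theorem ext {X Y : NFin} (h : ∀ z, z ∈ X.1 ↔ z ∈ Y.1) : X = Y := Subtype.ext (Finset.ext h)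

theorem mem_add {X Y : NFin} {z : ℤ} : z ∈ (X + Y).1 ↔ ∃ x ∈ X.1, ∃ y ∈ Y.1, x + y = z :=
  Finset.mem_add

theorem minz_mem (X : NFin) : minz X ∈ X.1 := X.1.min'_mem X.2

theorem maxz_mem (X : NFin) : maxz X ∈ X.1 := X.1.max'_mem X.2

theorem minz_le {X : NFin} {x : ℤ} (hx : x ∈ X.1) : minz X ≤ x := X.1.min'_le x hx

theorem le_maxz {X : NFin} {x : ℤ} (hx : x ∈ X.1) : x ≤ maxz X := X.1.le_max' x hx

theorem minz_le_maxz (X : NFin) : minz X ≤ maxz X := minz_le (maxz_mem X)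

theorem minz_eq {X : NFin} {m : ℤ} (hm : m ∈ X.1) (h : ∀ x ∈ X.1, m ≤ x) : minz X = m :=
  le_antisymm (minz_le hm) (h _ (minz_mem X))

theorem maxz_eq {X : NFin} {m : ℤ} (hm : m ∈ X.1) (h : ∀ x ∈ X.1, x ≤ m) : maxz X = m :=
  le_antisymm (h _ (maxz_mem X)) (le_maxz hm)

theorem minz_add (X Y : NFin) : minz (X + Y) = minz X + minz Y := by
  refine minz_eq (Finset.add_mem_add (minz_mem X) (minz_mem Y)) fun z hz => ?_
  obtain ⟨x, hx, y, hy, rfl⟩ := mem_add.1 hz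
  exact add_le_add (minz_le hx) (minz_le hy)

theorem maxz_add (X Y : NFin) : maxz (X + Y) = maxz X + maxz Y := by
  refine maxz_eq (Finset.add_mem_add (maxz_mem X) (maxz_mem Y)) fun z hz => ?_
  obtain ⟨x, hx, y, hy, rfl⟩ := mem_add.1 hz
  exact add_le_add (le_maxz hx) (le_maxz hy)

theorem mem_tr {X : NFin} {c z : ℤ} : z ∈ (tr X c).1 ↔ z - c ∈ X.1 := by
  simp [tr, sub_eq_add_neg]

theorem minz_tr (X : NFin) (c : ℤ) : minz (tr X c) = minz X + c := by
  refine minz_eq (mem_tr.2 (by simpa using minz_mem X)) fun z hz => ?_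
  linarith [minz_le (mem_tr.1 hz)]

theorem maxz_tr (X : NFin) (c : ℤ) : maxz (tr X c) = maxz X + c := by
  refine maxz_eq (mem_tr.2 (by simpa using maxz_mem X)) fun z hz => ?_
  linarith [le_maxz (mem_tr.1 hz)]

theorem tr_tr (X : NFin) (c d : ℤ) : tr (tr X c) d = tr X (c + d) :=
  ext fun z => by rw [mem_tr, mem_tr, mem_tr, sub_sub, add_comm d c]

theorem tr_zero (X : NFin) : tr X 0 = X := ext fun z => by rw [mem_tr, sub_zero]

theorem tr_add_tr (X Y : NFin) (c d : ℤ) : tr X c + tr Y d = tr (X + Y) (c + d) := by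
  refine ext fun z => ?_
  simp only [mem_tr, mem_add]
  constructor
  · rintro ⟨x, hx, y, hy, rfl⟩
    exact ⟨x - c, hx, y - d, hy, by ring⟩
  · rintro ⟨x, hx, y, hy, hxy⟩
    exact ⟨x + c, by simpa, y + d, by simpa, by linarith⟩

theorem eq_of_forall_mem_interior_iff {X Y : NFin} (hmin : minz X = minz Y)
    (hmax : maxz X = maxz Y)
    (h : ∀ z, minz X < z → z < maxz X → (z ∈ X.1 ↔ z ∈ Y.1)) : X = Y := by
  refine ext fun z => ?_
  by_cases hz : minz X < z ∧ z < maxz X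
  · exact h z hz.1 hz.2
  by_cases hz_min : z = minz X
  · exact iff_of_true (hz_min ▸ minz_mem X) (hz_min ▸ hmin ▸ minz_mem Y)
  by_cases hz_max : z = maxz X
  · exact iff_of_true (hz_max ▸ maxz_mem X) (hz_max ▸ hmax ▸ maxz_mem Y)
  refine iff_of_false (fun hX => ?_) fun hY => ?_
  · have := minz_le hX
    have := le_maxz hX
    omega
  · have := minz_le hY
    have := le_maxz hY
    omega

/-! ### Intervals and hulls -/

/-- The integer interval `[a, a + n]`, indexed by its length so that it is nonempty. -/
noncomputable def interval (a : ℤ) (n : ℕ) : NFin := ⟨Finset.Icc a (a + n), by simp⟩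

/-- The smallest integer interval containing `X`. In particular `hull X = X` says that `X` is an
interval. -/
noncomputable def hull (X : NFin) : NFin :=
  ⟨Finset.Icc (minz X) (maxz X), Finset.nonempty_Icc.2 (minz_le_maxz X)⟩

theorem mem_interval {a z : ℤ} {n : ℕ} : z ∈ (interval a n).1 ↔ a ≤ z ∧ z ≤ a + n :=
  Finset.mem_Icc

theorem mem_interval_zero {a z : ℤ} : z ∈ (interval a 0).1 ↔ z = a := by
  rw [mem_interval, Nat.cast_zero, add_zero, le_antisymm_iff, and_comm]

theorem minz_interval (a : ℤ) (n : ℕ) : minz (interval a n) = a :=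
  minz_eq (mem_interval.2 (by simp)) fun _ hx => (mem_interval.1 hx).1

theorem maxz_interval (a : ℤ) (n : ℕ) : maxz (interval a n) = a + n :=
  maxz_eq (mem_interval.2 (by simp)) fun _ hx => (mem_interval.1 hx).2

theorem tr_eq_add_interval (X : NFin) (c : ℤ) : tr X c = X + interval c 0 := by
  refine ext fun z => ?_
  simp only [mem_tr, mem_add, mem_interval_zero]
  constructor
  · exact fun h => ⟨_, h, c, rfl, sub_add_cancel z c⟩
  · rintro ⟨x, hx, y, rfl, rfl⟩
    rwa [add_sub_cancel_right]

theorem interval_succ (a : ℤ) (n : ℕ) : interval a (n + 1) = interval a n + interval 0 1 := by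
  refine ext fun z => ?_
  simp only [mem_add, mem_interval]
  push_cast
  constructor
  · intro hz
    by_cases hzn : z ≤ a + n
    · exact ⟨z, by omega, 0, by omega, add_zero z⟩
    · exact ⟨z - 1, by omega, 1, by omega, sub_add_cancel z 1⟩
  · rintro ⟨x, hx, y, hy, rfl⟩
    omega

theorem mem_hull {X : NFin} {z : ℤ} : z ∈ (hull X).1 ↔ minz X ≤ z ∧ z ≤ maxz X :=
  Finset.mem_Icc

theorem le_hull (X : NFin) : X ≤ hull X := fun _ hx => mem_hull.2 ⟨minz_le hx, le_maxz hx⟩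

theorem hull_eq_self_iff {X : NFin} : hull X = X ↔ ∀ z, minz X ≤ z → z ≤ maxz X → z ∈ X.1 :=
  ⟨fun h _ hz_min hz_max => h ▸ mem_hull.2 ⟨hz_min, hz_max⟩,
    fun h => le_antisymm (fun z hz => h z (mem_hull.1 hz).1 (mem_hull.1 hz).2) (le_hull X)⟩

theorem hull_interval (a : ℤ) (n : ℕ) : hull (interval a n) = interval a n :=
  hull_eq_self_iff.2 fun _ hz_min hz_max =>
    mem_interval.2 ⟨minz_interval a n ▸ hz_min, maxz_interval a n ▸ hz_max⟩

theorem hull_congr {X Y : NFin} (hmin : minz X = minz Y) (hmax : maxz X = maxz Y) :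
    hull X = hull Y :=
  ext fun z => by rw [mem_hull, mem_hull, hmin, hmax]

theorem exists_hull_eq_interval (X : NFin) :
    ∃ n : ℕ, maxz X = minz X + n ∧ hull X = interval (minz X) n := by
  obtain ⟨n, hn⟩ := Int.le.dest (minz_le_maxz X)
  exact ⟨n, hn.symm, ext fun z => by rw [mem_hull, mem_interval, hn]⟩

theorem hull_eq_self_of_maxz_le {X : NFin} (h : maxz X ≤ minz X + 1) : hull X = X := by
  refine hull_eq_self_iff.2 fun z hz_min hz_max => ?_
  obtain rfl | rfl : z = minz X ∨ z = maxz X := by omega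
  · exact minz_mem X
  · exact maxz_mem X

theorem eq_interval_zero {X : NFin} (h : maxz X = minz X) : X = interval (minz X) 0 := by
  obtain ⟨n, hn, hhull⟩ := exists_hull_eq_interval X
  obtain rfl : n = 0 := by omega
  rw [← hhull, hull_eq_self_of_maxz_le (by omega)]

theorem add_hull (X : NFin) : X + hull X = hull X + hull X := by
  refine ext fun z => ?_
  simp only [mem_add]
  constructor
  · rintro ⟨x, hx, y, hy, rfl⟩
    exact ⟨x, le_hull X hx, y, hy, rfl⟩
  · rintro ⟨x, hx, y, hy, rfl⟩
    rw [mem_hull] at hx hy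
    by_cases hxy : x + y - minz X ≤ maxz X
    · exact ⟨minz X, minz_mem X, x + y - minz X, mem_hull.2 (by omega), by ring⟩
    · exact ⟨maxz X, maxz_mem X, x + y - maxz X, mem_hull.2 (by omega), by ring⟩

/-! ### Additive functionals -/

section Functional

variable {A : Type*} [AddCommGroup A] (c : NFin →ₙ+ A)

theorem functional_interval_zero (a : ℤ) : c (interval a 0) = a • c (interval 1 0) := by
  have hadd : ∀ a b, c (interval (a + b) 0) = c (interval a 0) + c (interval b 0) := by
    intro a b
    rw [← map_add, ← tr_eq_add_interval]
    congr 1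
    exact ext fun z => by rw [mem_tr, mem_interval_zero, mem_interval_zero, sub_eq_iff_eq_add]
  simpa using map_zsmul (AddMonoidHom.mk' (fun a => c (interval a 0)) hadd) a 1

theorem functional_interval (a : ℤ) (n : ℕ) :
    c (interval a n) = a • c (interval 1 0) + n • c (interval 0 1) := by
  induction n with
  | zero => rw [functional_interval_zero, zero_smul, add_zero]
  | succ n ih => rw [interval_succ, map_add, ih, succ_nsmul, add_assoc]

theorem functional_hull (X : NFin) : c (hull X) = c X := by
  have h := congrArg c (add_hull X)
  rw [map_add, map_add] at h
  exact (add_right_cancel h).symm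

theorem functional_eq (X : NFin) :
    c X = minz X • c (interval 1 0) + (maxz X - minz X) • c (interval 0 1) := by
  obtain ⟨n, hn, hhull⟩ := exists_hull_eq_interval X
  rw [← functional_hull, hhull, functional_interval, hn, add_sub_cancel_left, natCast_zsmul]

theorem functional_eq_of_nonneg [PartialOrder A] [IsOrderedAddMonoid A] (hc : ∀ X, 0 ≤ c X)
    (X : NFin) : c X = (maxz X - minz X) • c (interval 0 1) := by
  have hpoint : c (interval 1 0) = 0 := by
    have hneg := hc (interval (-1) 0)
    rw [functional_interval_zero, neg_one_zsmul, neg_nonneg] at hneg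
    exact le_antisymm hneg (hc _)
  rw [functional_eq c X, hpoint, smul_zero, zero_add]

end Functional

/-! ### Inclusion through sums that are intervals -/

theorem exists_mem_iff_neg_notMem (X : NFin) {N : ℤ} (hmin : -N < minz X) (hmax : maxz X < N) :
    ∃ Y : NFin, minz Y = -N ∧ maxz Y = N ∧ ∀ y, y ∈ Y.1 ↔ (-N ≤ y ∧ y ≤ N) ∧ -y ∉ X.1 := by
  have hN := minz_le_maxz X
  have mem_filter : ∀ {y}, y ∈ (Finset.Icc (-N) N).filter (fun y => -y ∉ X.1) ↔
      (-N ≤ y ∧ y ≤ N) ∧ -y ∉ X.1 := by simp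
  have hleft := mem_filter.2 ⟨⟨le_refl (-N), by omega⟩, fun h => by
    have := le_maxz h
    omega⟩
  have hright := mem_filter.2 ⟨⟨by omega, le_refl N⟩, fun h => by
    have := minz_le h
    omega⟩
  exact ⟨⟨_, _, hleft⟩, minz_eq hleft fun y hy => (mem_filter.1 hy).1.1,
    maxz_eq hright fun y hy => (mem_filter.1 hy).1.2, fun _ => mem_filter⟩

-- The summand is the complement of `-X'` in a long interval, so that `0 ∉ X' + Y`.
theorem exists_hull_add_eq_self_of_not_le {X X' : NFin} (hmin : minz X = minz X')
    (hmax : maxz X = maxz X') (h : ¬ X ≤ X') :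
    ∃ Y, hull (X + Y) = X + Y ∧ hull (X' + Y) ≠ X' + Y := by
  obtain ⟨x₀, hx₀, hx₀'⟩ := Finset.not_subset.1 h
  have hx₀_min := minz_le hx₀
  have hx₀_max := le_maxz hx₀
  obtain ⟨N, hN⟩ : ∃ N : ℤ, 2 * (maxz X - minz X) < N ∧ 2 * maxz X - minz X < N ∧
      maxz X - 2 * minz X < N := ⟨2 * (|maxz X| + |minz X|) + 1, by grind⟩
  obtain ⟨Y, hminY, hmaxY, memY⟩ := exists_mem_iff_neg_notMem X' (N := N) (by omega) (by omega)
  have notMem_of_outside : ∀ z, z < minz X ∨ maxz X < z → z ∉ X'.1 := fun z hz hzX' => by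
    have := minz_le hzX'
    have := le_maxz hzX'
    omega
  refine ⟨Y, hull_eq_self_iff.2 fun z hz_min hz_max => ?_, fun hfull => ?_⟩
  · rw [minz_add, hminY] at hz_min
    rw [maxz_add, hmaxY] at hz_max
    have mem_of_sub : ∀ x ∈ X.1, (-N ≤ z - x ∧ z - x ≤ N) → -(z - x) ∉ X'.1 → z ∈ (X + Y).1 :=
      fun x hx hbd hX' => mem_add.2 ⟨x, hx, z - x, (memY _).2 ⟨hbd, hX'⟩, by ring⟩
    have of_minz := mem_of_sub _ (minz_mem X)
    have of_maxz := mem_of_sub _ (maxz_mem X)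
    rcases lt_trichotomy z 0 with hz | rfl | hz
    · by_cases hzN : -N ≤ z - maxz X
      · exact of_maxz (by omega) (notMem_of_outside _ (by omega))
      · exact of_minz (by omega) (notMem_of_outside _ (by omega))
    · exact mem_of_sub x₀ hx₀ (by omega) (by simpa using hx₀')
    · by_cases hzN : z - minz X ≤ N
      · exact of_minz (by omega) (notMem_of_outside _ (by omega))
      · exact of_maxz (by omega) (notMem_of_outside _ (by omega))
  · have hzero : 0 ∈ (X' + Y).1 := by
      apply hull_eq_self_iff.1 hfull
      · rw [minz_add, hminY]
        omega
      · rw [maxz_add, hmaxY]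
        omega
    obtain ⟨x, hx, y, hy, hxy⟩ := mem_add.1 hzero
    exact ((memY y).1 hy).2 (eq_neg_of_add_eq_zero_left hxy ▸ hx)

theorem le_iff_forall_hull_add_eq_self {X X' : NFin} (hmin : minz X = minz X')
    (hmax : maxz X = maxz X') :
    X ≤ X' ↔ ∀ Y, hull (X + Y) = X + Y → hull (X' + Y) = X' + Y := by
  refine ⟨fun hle Y hfull => ?_, fun h => ?_⟩
  · apply (le_hull _).antisymm'
    have hhull : hull (X' + Y) = X + Y := by
      rw [← hfull]
      exact hull_congr (by rw [minz_add, minz_add, hmin]) (by rw [maxz_add, maxz_add, hmax])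
    exact hhull.le.trans (Finset.add_subset_add_right hle)
  · by_contra hle
    obtain ⟨Y, hXY, hX'Y⟩ := exists_hull_add_eq_self_of_not_le hmin hmax hle
    exact hX'Y (h Y hXY)

/-! ### Pairs and triples -/

/-- The set `{a, b}`, the smallest one with endpoints `a ≤ b`. -/
def pair (a b : ℤ) : NFin := ⟨{a, b}, by simp⟩

/-- The set `{0, a, a + b}`, where `a` and `b` are the gaps between its elements. For positive
`a` and `b` these are the atoms above `pair 0 (a + b)` among the sets with the same endpoints. -/
def triple (a b : ℤ) : NFin := ⟨{0, a, a + b}, by simp⟩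

theorem mem_pair {a b z : ℤ} : z ∈ (pair a b).1 ↔ z = a ∨ z = b := by simp [pair]

theorem mem_triple {a b z : ℤ} : z ∈ (triple a b).1 ↔ z = 0 ∨ z = a ∨ z = a + b := by
  simp [triple]

theorem minz_pair {a b : ℤ} (h : a ≤ b) : minz (pair a b) = a :=
  minz_eq (mem_pair.2 (Or.inl rfl)) fun z hz => by
    rw [mem_pair] at hz
    omega

theorem maxz_pair {a b : ℤ} (h : a ≤ b) : maxz (pair a b) = b :=
  maxz_eq (mem_pair.2 (Or.inr rfl)) fun z hz => by
    rw [mem_pair] at hz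
    omega

theorem minz_triple {a b : ℤ} (ha : 0 ≤ a) (hb : 0 ≤ b) : minz (triple a b) = 0 :=
  minz_eq (by simp [mem_triple]) fun z hz => by
    rw [mem_triple] at hz
    omega

theorem maxz_triple {a b : ℤ} (ha : 0 ≤ a) (hb : 0 ≤ b) : maxz (triple a b) = a + b :=
  maxz_eq (by simp [mem_triple]) fun z hz => by
    rw [mem_triple] at hz
    omega

theorem pair_minz_maxz_le (X : NFin) : pair (minz X) (maxz X) ≤ X := by
  intro z hz
  obtain rfl | rfl := mem_pair.1 hz
  · exact minz_mem X
  · exact maxz_mem X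

theorem tr_triple_le_iff {X : NFin} {a b : ℤ} (hX : maxz X = minz X + (a + b)) :
    tr (triple a b) (minz X) ≤ X ↔ minz X + a ∈ X.1 := by
  refine ⟨fun h => h (mem_tr.2 (mem_triple.2 (by simp))), fun h z hz => ?_⟩
  rw [mem_tr, mem_triple] at hz
  obtain rfl | rfl | rfl : z = minz X ∨ z = minz X + a ∨ z = maxz X := by omega
  · exact minz_mem X
  · exact h
  · exact maxz_mem X

theorem eq_pair_or_exists_triple_le {X : NFin} (hX : minz X = 0) :
    X = pair 0 (maxz X) ∨ ∃ a b, 0 < a ∧ 0 < b ∧ a + b = maxz X ∧ triple a b ≤ X := by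
  by_cases hle : X ≤ pair 0 (maxz X)
  · exact Or.inl (hle.antisymm (hX ▸ pair_minz_maxz_le X))
  obtain ⟨a, haX, ha⟩ := Finset.not_subset.1 hle
  rw [mem_pair] at ha
  have ha_min := minz_le haX
  have ha_max := le_maxz haX
  refine Or.inr ⟨a, maxz X - a, by omega, by omega, by ring, ?_⟩
  have h := tr_triple_le_iff (X := X) (a := a) (b := maxz X - a) (by rw [hX]; ring)
  rw [hX, tr_zero, zero_add] at h
  exact h.2 haX

theorem eq_pair_or_eq_triple_of_le {X : NFin} {a b : ℤ} (hmin : minz X = 0)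
    (hmax : maxz X = a + b) (hle : X ≤ triple a b) : X = pair 0 (a + b) ∨ X = triple a b := by
  obtain h | ⟨a', b', ha', hb', hsum, hle'⟩ := eq_pair_or_exists_triple_le hmin
  · exact Or.inl (hmax ▸ h)
  · have ha : a' ∈ (triple a b).1 := hle (hle' (mem_triple.2 (by simp)))
    rw [mem_triple] at ha
    obtain rfl : a' = a := by omega
    obtain rfl : b' = b := by omega
    exact Or.inr (hle.antisymm hle')

theorem triple_ne_pair {a b : ℤ} (ha : 0 < a) (hb : 0 < b) : triple a b ≠ pair 0 (a + b) := by
  intro h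
  have ha_mem : a ∈ (pair 0 (a + b)).1 := h ▸ mem_triple.2 (by simp)
  rw [mem_pair] at ha_mem
  omega

theorem hull_triple_add_interval_eq_self_iff {a b : ℤ} (ha : 0 < a) (hb : 0 < b) (n : ℕ) :
    hull (triple a b + interval 0 n) = triple a b + interval 0 n ↔ a ≤ n + 1 ∧ b ≤ n + 1 := by
  have mem_sum : ∀ {z}, z ∈ (triple a b + interval 0 n).1 ↔
      (0 ≤ z ∧ z ≤ n) ∨ (a ≤ z ∧ z ≤ a + n) ∨ (a + b ≤ z ∧ z ≤ a + b + n) := by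
    intro z
    simp only [mem_add, mem_triple, mem_interval]
    constructor
    · rintro ⟨x, hx, y, hy, rfl⟩
      omega
    · rintro (h | h | h)
      exacts [⟨0, by simp, z, by omega, by ring⟩, ⟨a, by simp, z - a, by omega, by ring⟩,
        ⟨a + b, by simp, z - (a + b), by omega, by ring⟩]
  simp only [hull_eq_self_iff, mem_sum, minz_add, maxz_add, minz_triple ha.le hb.le,
    maxz_triple ha.le hb.le, minz_interval, maxz_interval]
  constructor
  · intro h
    have := h (a - 1)
    have := h (a + b - 1)
    omega
  · intro h z _ _
    omega

/-! ### Endomorphisms preserving the endpoints -/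

/-- The reflection of `X` that exchanges its endpoints. -/
def reflect (X : NFin) : NFin := tr (negF X) (minz X + maxz X)

theorem mem_reflect {X : NFin} {z : ℤ} : z ∈ (reflect X).1 ↔ minz X + maxz X - z ∈ X.1 := by
  rw [reflect, mem_tr, negF, Finset.mem_neg', neg_sub]

theorem minz_reflect (X : NFin) : minz (reflect X) = minz X := by
  refine minz_eq (mem_reflect.2 (by simpa using maxz_mem X)) fun z hz => ?_
  linarith [le_maxz (mem_reflect.1 hz)]

theorem maxz_reflect (X : NFin) : maxz (reflect X) = maxz X := by
  refine maxz_eq (mem_reflect.2 (by simpa using minz_mem X)) fun z hz => ?_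
  linarith [minz_le (mem_reflect.1 hz)]

/-- A surjective endomorphism preserving the minimum and the maximum of each set. -/
structure EndpointPreserving (ψ : NFin →ₙ+ NFin) : Prop where
  surjective : Function.Surjective ψ
  minz_map : ∀ X, minz (ψ X) = minz X
  maxz_map : ∀ X, maxz (ψ X) = maxz X

namespace EndpointPreserving

variable {ψ : NFin →ₙ+ NFin}

theorem hull_map (hψ : EndpointPreserving ψ) (X : NFin) : hull (ψ X) = hull X :=
  hull_congr (hψ.minz_map X) (hψ.maxz_map X)

theorem injective (hψ : EndpointPreserving ψ) : Function.Injective ψ := by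
  refine injective_of_surjective_of_finite_fibers hψ.surjective hψ.hull_map fun H => ?_
  refine (H.1.powerset.finite_toSet.preimage Subtype.val_injective.injOn).subset ?_
  rintro X rfl
  exact Finset.mem_powerset.2 (le_hull X)

theorem map_interval (hψ : EndpointPreserving ψ) (a : ℤ) (n : ℕ) :
    ψ (interval a n) = interval a n := by
  have map_of_short : ∀ (a : ℤ) (n : ℕ), n ≤ 1 → ψ (interval a n) = interval a n := by
    intro a n hn
    have hfull : hull (ψ (interval a n)) = ψ (interval a n) := by
      apply hull_eq_self_of_maxz_le
      rw [hψ.minz_map, hψ.maxz_map, minz_interval, maxz_interval]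
      omega
    rw [← hfull, hψ.hull_map, hull_interval]
  induction n with
  | zero => exact map_of_short a 0 zero_le_one
  | succ n ih => rw [interval_succ, map_add, ih, map_of_short 0 1 le_rfl]

theorem map_tr (hψ : EndpointPreserving ψ) (X : NFin) (c : ℤ) : ψ (tr X c) = tr (ψ X) c := by
  rw [tr_eq_add_interval, map_add, hψ.map_interval, ← tr_eq_add_interval]

theorem map_hull (hψ : EndpointPreserving ψ) (X : NFin) : ψ (hull X) = hull X := by
  obtain ⟨n, -, hhull⟩ := exists_hull_eq_interval X
  rw [hhull, hψ.map_interval]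

theorem hull_map_eq_self_iff (hψ : EndpointPreserving ψ) {X : NFin} :
    hull (ψ X) = ψ X ↔ hull X = X := by
  rw [hψ.hull_map, ← hψ.injective.eq_iff (a := hull X) (b := X), hψ.map_hull]

theorem map_le_map_iff (hψ : EndpointPreserving ψ) {X X' : NFin} (hmin : minz X = minz X')
    (hmax : maxz X = maxz X') : ψ X ≤ ψ X' ↔ X ≤ X' := by
  rw [le_iff_forall_hull_add_eq_self hmin hmax, le_iff_forall_hull_add_eq_self
    (by rw [hψ.minz_map, hψ.minz_map, hmin]) (by rw [hψ.maxz_map, hψ.maxz_map, hmax]),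
    hψ.surjective.forall]
  simp only [← map_add, hψ.hull_map_eq_self_iff]

theorem map_pair (hψ : EndpointPreserving ψ) {a b : ℤ} (hab : a ≤ b) :
    ψ (pair a b) = pair a b := by
  obtain ⟨X, hX⟩ := hψ.surjective (pair a b)
  have hmin : minz X = a := by rw [← hψ.minz_map, hX, minz_pair hab]
  have hmax : maxz X = b := by rw [← hψ.maxz_map, hX, maxz_pair hab]
  have hle : ψ (pair a b) ≤ ψ X :=
    (hψ.map_le_map_iff (by rw [minz_pair hab, hmin]) (by rw [maxz_pair hab, hmax])).2
      (hmin ▸ hmax ▸ pair_minz_maxz_le X)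
  have hge := pair_minz_maxz_le (ψ (pair a b))
  rw [hψ.minz_map, hψ.maxz_map, minz_pair hab, maxz_pair hab] at hge
  exact (hle.trans hX.le).antisymm hge

theorem exists_map_triple_eq (hψ : EndpointPreserving ψ) {a b : ℤ} (ha : 0 < a) (hb : 0 < b) :
    ∃ a' b', 0 < a' ∧ 0 < b' ∧ a' + b' = a + b ∧ ψ (triple a b) = triple a' b' := by
  have hmin : minz (ψ (triple a b)) = 0 := by rw [hψ.minz_map, minz_triple ha.le hb.le]
  have hmax : maxz (ψ (triple a b)) = a + b := by rw [hψ.maxz_map, maxz_triple ha.le hb.le]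
  have hpair := hψ.map_pair (a := 0) (b := a + b) (by omega)
  obtain h | ⟨a', b', ha', hb', hsum, hle⟩ := eq_pair_or_exists_triple_le hmin
  · rw [hmax, ← hpair, hψ.injective.eq_iff] at h
    exact absurd h (triple_ne_pair ha hb)
  rw [hmax] at hsum
  obtain ⟨X, hX⟩ := hψ.surjective (triple a' b')
  have hX_min : minz X = 0 := by rw [← hψ.minz_map, hX, minz_triple ha'.le hb'.le]
  have hX_max : maxz X = a + b := by rw [← hψ.maxz_map, hX, maxz_triple ha'.le hb'.le, hsum]
  have hX_le : X ≤ triple a b := by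
    rwa [← hX, hψ.map_le_map_iff (by rw [hX_min, minz_triple ha.le hb.le])
      (by rw [hX_max, maxz_triple ha.le hb.le])] at hle
  obtain rfl | rfl := eq_pair_or_eq_triple_of_le hX_min hX_max hX_le
  · rw [hpair, ← hsum] at hX
    exact absurd hX.symm (triple_ne_pair ha' hb')
  · exact ⟨a', b', ha', hb', hsum, hX⟩

theorem map_triple (hψ : EndpointPreserving ψ) {a b : ℤ} (ha : 0 < a) (hb : 0 < b) :
    ψ (triple a b) = triple a b ∨ ψ (triple a b) = triple b a := by
  obtain ⟨a', b', ha', hb', hsum, hmap⟩ := hψ.exists_map_triple_eq ha hb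
  have hgaps : ∀ n : ℕ, (a' ≤ n + 1 ∧ b' ≤ n + 1) ↔ (a ≤ n + 1 ∧ b ≤ n + 1) := by
    intro n
    rw [← hull_triple_add_interval_eq_self_iff ha hb,
      ← hull_triple_add_interval_eq_self_iff ha' hb', ← hmap, ← hψ.map_interval,
      ← map_add, hψ.hull_map_eq_self_iff, hψ.map_interval]
  have hmax_le := (hgaps (max a b - 1).toNat).2 (by omega)
  have hle_max := (hgaps (max a' b' - 1).toNat).1 (by omega)
  obtain ⟨rfl, rfl⟩ | ⟨rfl, rfl⟩ : (a' = a ∧ b' = b) ∨ (a' = b ∧ b' = a) := by omega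
  · exact Or.inl hmap
  · exact Or.inr hmap

theorem mem_map_iff (hψ : EndpointPreserving ψ) {X : NFin} {a b a' b' : ℤ}
    (ha : 0 ≤ a) (hb : 0 ≤ b) (hsum : a' + b' = a + b) (hmap : ψ (triple a b) = triple a' b')
    (hX : maxz X = minz X + (a + b)) : minz X + a' ∈ (ψ X).1 ↔ minz X + a ∈ X.1 := by
  have hle := hψ.map_le_map_iff (X := tr (triple a b) (minz X)) (X' := X)
    (by rw [minz_tr, minz_triple ha hb, zero_add])
    (by rw [maxz_tr, maxz_triple ha hb, hX, add_comm])
  have hmem := tr_triple_le_iff (X := ψ X) (a := a') (b := b')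
    (by rw [hψ.maxz_map, hψ.minz_map, hX, hsum])
  rw [hψ.minz_map] at hmem
  rw [← hmem, ← tr_triple_le_iff hX, ← hle, hψ.map_tr, hmap]

theorem map_triple_swap (hψ : EndpointPreserving ψ) {a b : ℤ} (ha : 0 < a) (hb : 0 < b)
    (h : ψ (triple a b) = triple b a) : ψ (triple b a) = triple a b :=
  (hψ.map_triple hb ha).elim (fun h' => h'.trans (hψ.injective (h'.trans h.symm))) id

theorem map_triple_swap_iff (hψ : EndpointPreserving ψ) {a b : ℤ} (ha : 0 < a) (hb : 0 < b) :
    ψ (triple a b) = triple b a ↔ ψ (triple b a) = triple a b :=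
  ⟨hψ.map_triple_swap ha hb, hψ.map_triple_swap hb ha⟩

-- The set `{0, a, a + b} + {0, c}` contains `a`, so its image contains `a` or `b + c` according to
-- the choice made for `(a, b + c)`; but the choice for `(a, b)` determines that image.
theorem map_triple_add_iff (hψ : EndpointPreserving ψ) {a b c : ℤ} (ha : 0 < a) (hb : 0 < b)
    (hc : 0 < c) (hab : a ≠ b) (hac : a ≠ c) (habc : a ≠ b + c) :
    ψ (triple a (b + c)) = triple (b + c) a ↔ ψ (triple a b) = triple b a := by
  let X := triple a b + pair 0 c
  have hX_min : minz X = 0 := by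
    rw [minz_add, minz_triple ha.le hb.le, minz_pair hc.le, add_zero]
  have hX_max : maxz X = minz X + (a + (b + c)) := by
    rw [hX_min, maxz_add, maxz_triple ha.le hb.le, maxz_pair hc.le, zero_add, add_assoc]
  have ha_mem : minz X + a ∈ X.1 :=
    mem_add.2 ⟨a, by simp [mem_triple], 0, by simp [mem_pair], by rw [hX_min, add_comm]⟩
  have mem_of_map {a' b'} (hsum : a' + b' = a + (b + c))
      (hmap : ψ (triple a (b + c)) = triple a' b') :
      ∃ x ∈ (ψ (triple a b)).1, x = a' ∨ x + c = a' := by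
    have h := (hψ.mem_map_iff ha.le (by omega) hsum hmap hX_max).2 ha_mem
    rw [map_add, hψ.map_pair hc.le, hX_min, zero_add] at h
    obtain ⟨x, hx, y, hy, hxy⟩ := mem_add.1 h
    rw [mem_pair] at hy
    exact ⟨x, hx, by omega⟩
  constructor
  · intro hswap
    refine (hψ.map_triple ha hb).resolve_left fun hfix => ?_
    obtain ⟨x, hx, hxa⟩ := mem_of_map (by ring) hswap
    rw [hfix, mem_triple] at hx
    omega
  · intro hswap
    refine (hψ.map_triple ha (add_pos hb hc)).resolve_left fun hfix => ?_
    obtain ⟨x, hx, hxa⟩ := mem_of_map rfl hfix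
    rw [hswap, mem_triple] at hx
    omega

theorem map_triple_iff_of_lt (hψ : EndpointPreserving ψ) {a x y : ℤ} (ha : 0 < a) (hx : 0 < x)
    (hxy : x < y) (hax : a ≠ x) (hay : a ≠ y) (hayx : a ≠ y - x) :
    ψ (triple a y) = triple y a ↔ ψ (triple a x) = triple x a := by
  have := hψ.map_triple_add_iff ha hx (sub_pos.2 hxy) hax hayx (by omega)
  rwa [add_sub_cancel] at this

theorem map_triple_one_iff (hψ : EndpointPreserving ψ) {x : ℤ} (hx : 2 ≤ x) :
    ψ (triple 1 x) = triple x 1 ↔ ψ (triple 1 2) = triple 2 1 :=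
  calc
    ψ (triple 1 x) = triple x 1 ↔ ψ (triple 1 (x + 2)) = triple (x + 2) 1 :=
      (hψ.map_triple_iff_of_lt one_pos (by omega) (by omega) (by omega) (by omega)
        (by omega)).symm
    _ ↔ ψ (triple 1 2) = triple 2 1 :=
      hψ.map_triple_iff_of_lt one_pos two_pos (by omega) (by omega) (by omega) (by omega)

theorem map_triple_iff_one_two (hψ : EndpointPreserving ψ) {a b : ℤ} (ha : 0 < a) (hb : 0 < b)
    (hab : a ≠ b) : ψ (triple a b) = triple b a ↔ ψ (triple 1 2) = triple 2 1 := by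
  wlog hba : b ≤ a generalizing a b
  · rw [hψ.map_triple_swap_iff ha hb]
    exact this hb ha hab.symm (le_of_not_ge hba)
  obtain rfl | hb_one : b = 1 ∨ 1 < b := by omega
  · rw [hψ.map_triple_swap_iff ha hb, hψ.map_triple_one_iff (by omega)]
  · rw [hψ.map_triple_iff_of_lt ha one_pos hb_one (by omega) hab (by omega),
      hψ.map_triple_swap_iff ha one_pos, hψ.map_triple_one_iff (by omega)]

theorem map_triple_eq_self_or_swap (hψ : EndpointPreserving ψ) :
    (∀ a b, 0 < a → 0 < b → ψ (triple a b) = triple a b) ∨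
      ∀ a b, 0 < a → 0 < b → ψ (triple a b) = triple b a := by
  by_cases hswap : ψ (triple 1 2) = triple 2 1
  · refine Or.inr fun a b ha hb => ?_
    obtain rfl | hab := eq_or_ne a b
    · exact (hψ.map_triple ha hb).elim id id
    · exact (hψ.map_triple_iff_one_two ha hb hab).2 hswap
  · refine Or.inl fun a b ha hb => ?_
    obtain rfl | hab := eq_or_ne a b
    · exact (hψ.map_triple ha hb).elim id id
    · exact (hψ.map_triple ha hb).resolve_right (mt (hψ.map_triple_iff_one_two ha hb hab).1 hswap)

theorem eq_id_or_eq_reflect (hψ : EndpointPreserving ψ) :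
    (∀ X, ψ X = X) ∨ ∀ X, ψ X = reflect X := by
  refine hψ.map_triple_eq_self_or_swap.imp (fun hfix X => ?_) fun hswap X => ?_
  · refine eq_of_forall_mem_interior_iff (hψ.minz_map X) (hψ.maxz_map X) fun z hz_min hz_max => ?_
    rw [hψ.minz_map] at hz_min
    rw [hψ.maxz_map] at hz_max
    have h := hψ.mem_map_iff (X := X) (by omega) (by omega) rfl
      (hfix (z - minz X) (maxz X - z) (by omega) (by omega)) (by ring)
    rwa [add_sub_cancel] at h
  · refine eq_of_forall_mem_interior_iff ((hψ.minz_map X).trans (minz_reflect X).symm)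
      ((hψ.maxz_map X).trans (maxz_reflect X).symm) fun z hz_min hz_max => ?_
    rw [hψ.minz_map] at hz_min
    rw [hψ.maxz_map] at hz_max
    have h := hψ.mem_map_iff (X := X) (by omega) (by omega) (add_comm _ _)
      (hswap (maxz X - z) (z - minz X) (by omega) (by omega)) (by ring)
    rwa [add_sub_cancel, ← add_sub_assoc, ← mem_reflect] at h

end EndpointPreserving

/-! ### Normalization of a surjective endomorphism -/

section Normalize

variable {φ : NFin →ₙ+ NFin}

theorem maxz_sub_minz_map (hφ : Function.Surjective φ) (X : NFin) :
    maxz (φ X) - minz (φ X) = maxz X - minz X := by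
  let width : NFin →ₙ+ ℤ :=
    ⟨fun X => maxz (φ X) - minz (φ X), fun X Y => by
      rw [map_add, maxz_add, minz_add, add_sub_add_comm]⟩
  have hnonneg : ∀ X, 0 ≤ width X := fun X => sub_nonneg.2 (minz_le_maxz _)
  have hwidth := functional_eq_of_nonneg width hnonneg
  obtain ⟨Z, hZ⟩ := hφ (interval 0 1)
  have hZ_width : width Z = 1 := by
    change maxz (φ Z) - minz (φ Z) = 1
    rw [hZ, maxz_interval, minz_interval]
    norm_num
  have hone : width (interval 0 1) = 1 :=
    Int.eq_one_of_mul_eq_one_left (hnonneg _) ((hwidth Z).symm.trans hZ_width)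
  have := hwidth X
  rwa [hone, smul_eq_mul, mul_one] at this

theorem exists_map_tr (hφ : Function.Surjective φ) (X : NFin) (c : ℤ) :
    ∃ d, φ (tr X c) = tr (φ X) d := by
  have hpoint : maxz (φ (interval c 0)) = minz (φ (interval c 0)) := by
    have := maxz_sub_minz_map hφ (interval c 0)
    rw [maxz_interval, minz_interval] at this
    omega
  exact ⟨minz (φ (interval c 0)), by
    rw [tr_eq_add_interval, map_add, tr_eq_add_interval, ← eq_interval_zero hpoint]⟩

/-- The endomorphism `φ` followed by the translations that restore the minimum of each set. -/
def normalize (φ : NFin →ₙ+ NFin) : NFin →ₙ+ NFin where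
  toFun X := tr (φ X) (minz X - minz (φ X))
  map_add' X Y := by rw [tr_add_tr, map_add, minz_add, minz_add, add_sub_add_comm]

theorem normalize_apply (X : NFin) : normalize φ X = tr (φ X) (minz X - minz (φ X)) := rfl

theorem tr_normalize (X : NFin) : tr (normalize φ X) (minz (φ X) - minz X) = φ X := by
  rw [normalize_apply, tr_tr, sub_add_sub_cancel, sub_self, tr_zero]

theorem minz_normalize (X : NFin) : minz (normalize φ X) = minz X := by
  rw [normalize_apply, minz_tr, add_sub_cancel]

theorem endpointPreserving_normalize (hφ : Function.Surjective φ) :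
    EndpointPreserving (normalize φ) where
  surjective Y := by
    obtain ⟨X, rfl⟩ := hφ Y
    let X' := tr X (minz (φ X) - minz X)
    obtain ⟨d, hd⟩ : ∃ d, normalize φ X' = tr (φ X) d := by
      obtain ⟨d, hd⟩ := exists_map_tr hφ X (minz (φ X) - minz X)
      exact ⟨_, by rw [normalize_apply, hd, tr_tr]⟩
    have hd_zero : d = 0 := by
      have hmin := minz_normalize (φ := φ) X'
      rw [hd, minz_tr, minz_tr] at hmin
      omega
    exact ⟨X', by rw [hd, hd_zero, tr_zero]⟩
  minz_map := minz_normalize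
  maxz_map X := by
    have := maxz_sub_minz_map hφ X
    rw [normalize_apply, maxz_tr]
    omega

end Normalize

theorem negF_tr (X : NFin) (c : ℤ) : negF (tr X c) = tr (negF X) (-c) :=
  ext fun z => by
    rw [mem_tr, negF, negF, Finset.mem_neg', Finset.mem_neg', mem_tr]
    ring_nf

end NFin

open NFin

theorem stmt_3_general (φ : NFin → NFin) (hsurj : Function.Surjective φ)
    (hadd : ∀ X Y : NFin, φ (X + Y) = φ X + φ Y) :
    ∃ α β : ℤ, φ = phiab α β ∨ φ = negF ∘ phiab α β := by
  let φ' : NFin →ₙ+ NFin := ⟨φ, hadd⟩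
  obtain ⟨s, t, hmin⟩ : ∃ s t : ℤ, ∀ X, minz (φ X) = minz X * s + (maxz X - minz X) * t :=
    ⟨_, _, functional_eq ⟨fun X => minz (φ X), fun X Y => by rw [hadd, minz_add]⟩⟩
  have hφ : ∀ X, tr (normalize φ' X) (minz (φ X) - minz X) = φ X := tr_normalize (φ := φ')
  obtain hid | hreflect := (endpointPreserving_normalize (φ := φ') hsurj).eq_id_or_eq_reflect
  · refine ⟨s - t - 1, t, Or.inl (funext fun X => ?_)⟩
    rw [← hφ, hid, hmin, phiab]
    ring_nf
  · refine ⟨t - s, -t - 1, Or.inr (funext fun X => ?_)⟩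
    rw [← hφ, hreflect, hmin, reflect, tr_tr, Function.comp_apply, phiab, negF_tr]
    ring_nf

/-- Every automorphism of `P_fin(ℤ)` is of the form `±φ_{α,β}` for some integers `α, β`. -/
theorem stmt_3 (φ : NFin → NFin) (hbij : Function.Bijective φ)
    (hadd : ∀ X Y : NFin, φ (X + Y) = φ X + φ Y) :
    ∃ α β : ℤ, φ = phiab α β ∨ φ = negF ∘ phiab α β :=
  stmt_3_general φ hbij.surjective hadd
end

section
/- For every integer α, the map g_α defined by g_α(X) := X + (α−1)·min X − (α+1)·max X is an involutive automorphism of the monoid P_fin(ℤ): it is bijective, satisfies g_α(X + Y) = g_α(X) + g_α(Y), and g_α ∘ g_α is the identity map. -/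
open Finset Pointwise

/-!
Inside the commutative monoid of nonempty finite sets, translating by `c` is adding the singleton
`{c}`, so `g_α X = X + ι (φ X)`, where `ι c = {c}` and `φ = (α - 1) • min - (α + 1) • max` are both
additive. Hence `g_α` is additive, and it is an involution because `φ (ι c) = -2c`.
-/

theorem involutive_id_add_comp {M A : Type*} [AddCommMonoid M] [AddCommGroup A]
    (ι : A →+ M) (φ : M →+ A) (h : ∀ a, φ (ι a) = -(a + a)) :
    Function.Involutive (AddMonoidHom.id M + ι.comp φ) := by
  intro x
  have total_shift : φ x + φ (x + ι (φ x)) = 0 := by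
    rw [map_add, h]
    abel
  calc x + ι (φ x) + ι (φ (x + ι (φ x)))
      = x + ι (φ x + φ (x + ι (φ x))) := by rw [map_add ι, add_assoc]
    _ = x := by rw [total_shift, map_zero, add_zero]

section MinMaxAdd

variable {M : Type*} [AddMonoid M] [LinearOrder M] [AddLeftMono M] [AddRightMono M]

theorem min'_add {s t : Finset M} (hs : s.Nonempty) (ht : t.Nonempty) :
    (s + t).min' (hs.add ht) = s.min' hs + t.min' ht := by
  refine (isLeast_min' _ _).unique ?_
  rw [coe_add]
  exact ⟨Set.add_mem_add (s.min'_mem hs) (t.min'_mem ht), subset_lowerBounds_add _ _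
    (Set.add_mem_add (s.isLeast_min' hs).2 (t.isLeast_min' ht).2)⟩

theorem max'_add {s t : Finset M} (hs : s.Nonempty) (ht : t.Nonempty) :
    (s + t).max' (hs.add ht) = s.max' hs + t.max' ht :=
  min'_add (M := Mᵒᵈ) hs ht

end MinMaxAdd

/-- The monoid of nonempty finite subsets of `M` under the sumset operation, `P_fin(M)`, as a
submonoid of Mathlib's pointwise monoid `Finset M` (which also contains `∅`). -/
def nonemptyFinsets (M : Type*) [AddMonoid M] [DecidableEq M] : AddSubmonoid (Finset M) where
  carrier := {s | s.Nonempty}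
  zero_mem' := zero_nonempty
  add_mem' := Finset.Nonempty.add

namespace nonemptyFinsets

/-- The embedding `c ↦ {c}` of `M` into `P_fin(M)`; adding `{c}` is translation by `c`. -/
def singletonHom (M : Type*) [AddMonoid M] [DecidableEq M] : M →+ nonemptyFinsets M :=
  singletonAddMonoidHom.codRestrict _ singleton_nonempty

section MinMax

variable (M : Type*) [AddMonoid M] [LinearOrder M] [AddLeftMono M] [AddRightMono M]

/-- The minimum, as an additive map on `P_fin(M)`. -/
def minHom : nonemptyFinsets M →+ M where
  toFun X := X.1.min' X.2
  map_zero' := min'_zero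
  map_add' X Y := min'_add X.2 Y.2

/-- The maximum, as an additive map on `P_fin(M)`. -/
def maxHom : nonemptyFinsets M →+ M where
  toFun X := X.1.max' X.2
  map_zero' := max'_zero
  map_add' X Y := max'_add X.2 Y.2

variable {M}

theorem minHom_singletonHom (c : M) : minHom M (singletonHom M c) = c :=
  min'_singleton c

theorem maxHom_singletonHom (c : M) : maxHom M (singletonHom M c) = c :=
  max'_singleton c

end MinMax

section MinMaxShift

variable {R G : Type*} [Ring R] [AddCommGroup G] [LinearOrder G] [IsOrderedAddMonoid G] [Module R G]

/-- The map `g_α`, `X ↦ X + (α - 1) • min X - (α + 1) • max X`, on `P_fin(G)` for an ordered group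
`G` with scalars in `R`. For `R = AddMonoid.End G`, `α` is any additive endomorphism. -/
def minMaxShift (α : R) : nonemptyFinsets G →+ nonemptyFinsets G :=
  AddMonoidHom.id _ + (singletonHom G).comp ((α - 1) • minHom G - (α + 1) • maxHom G)

theorem minMaxShift_involutive (α : R) :
    Function.Involutive (minMaxShift α : nonemptyFinsets G → nonemptyFinsets G) := by
  refine involutive_id_add_comp _ _ fun c => ?_
  calc (α - 1) • minHom G (singletonHom G c) - (α + 1) • maxHom G (singletonHom G c)
      = (α - 1) • c - (α + 1) • c := by rw [minHom_singletonHom, maxHom_singletonHom]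
    _ = -(c + c) := by
      rw [sub_smul, add_smul, one_smul]
      abel

end MinMaxShift

end nonemptyFinsets

open nonemptyFinsets

theorem stmt_13_general {R G : Type*} [Ring R] [AddCommGroup G] [LinearOrder G]
    [IsOrderedAddMonoid G] [Module R G] (α : R) :
    (∀ X Y : nonemptyFinsets G, minMaxShift α (X + Y) = minMaxShift α X + minMaxShift α Y) ∧
    Function.Bijective (minMaxShift α : nonemptyFinsets G → nonemptyFinsets G) ∧
    (minMaxShift α : nonemptyFinsets G → nonemptyFinsets G) ∘ minMaxShift α = id :=
  ⟨map_add _, (minMaxShift_involutive α).bijective, (minMaxShift_involutive α).comp_self⟩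

theorem ga_eq_minMaxShift (α : ℤ) :
    ga α = (minMaxShift α : nonemptyFinsets ℤ → nonemptyFinsets ℤ) :=
  funext fun _ => Subtype.ext (add_singleton _).symm

/-- Each `g_α` is an involutive automorphism of `P_fin(ℤ)`. -/
theorem stmt_13 (α : ℤ) :
    (∀ X Y : NFin, ga α (X + Y) = ga α X + ga α Y) ∧
    Function.Bijective (ga α) ∧ ga α ∘ ga α = id := by
  rw [ga_eq_minMaxShift]
  exact stmt_13_general α
end
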